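/- Let l_1,…,l_n and r_1,…,r_n be d-dimensional bit vectors and let ℓ ≥ 1, p ∈ {0,1}, q ≥ 0 be integers. If some pair l_i, r_j is orthogonal, then the diameter of G = G_{L,R,ℓ,p,q} equals 6ℓ − 3p + q. -/

import Mathlib

namespace GraphOV

/-- Two bit vectors (functions into `Fin 2`) are orthogonal if in every coordinate
at least one of them is `0`. -/
def Orth {d : ℕ} (a b : Fin d → Fin 2) : Prop := ∀ k, a k = 0 ∨ b k = 0

/-- A system of internally disjoint paths joining exterior vertices from `E`:
for each path name `i : ι` we record its two endpoints and its length. -/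
structure PathSys (E : Type) (ι : Type) where
  src : ι → E
  dst : ι → E
  len : ι → ℕ

namespace PathSys

variable {E ι : Type}

/-- Endpoints of zero-length paths get identified. -/
def idRel (S : PathSys E ι) (a b : E) : Prop :=
  ∃ i, S.len i = 0 ∧ S.src i = a ∧ S.dst i = b

/-- Vertices of the glued graph: exterior vertices (up to identification) together
with, for each path of length `m`, fresh interior vertices at positions `1,…,m-1`. -/
def Vert (S : PathSys E ι) : Type :=
  Quot S.idRel ⊕ Σ i : ι, {t : ℕ // 0 < t ∧ t < S.len i}

/-- The vertex corresponding to an exterior vertex. -/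
def ext (S : PathSys E ι) (a : E) : S.Vert := Sum.inl (Quot.mk _ a)

/-- The `t`-th vertex on the path named `i` (for `0 ≤ t ≤ S.len i`). -/
def pt (S : PathSys E ι) (i : ι) (t : ℕ) : S.Vert :=
  if h : 0 < t ∧ t < S.len i then Sum.inr ⟨i, t, h⟩
  else if t = 0 then S.ext (S.src i) else S.ext (S.dst i)

/-- The glued graph: consecutive vertices on each path are adjacent. -/
def graph (S : PathSys E ι) : SimpleGraph S.Vert :=
  SimpleGraph.fromRel fun a b =>
    ∃ i t, t + 1 ≤ S.len i ∧ a = S.pt i t ∧ b = S.pt i (t + 1)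

/-- The set of vertices lying on the path named `i`. -/
def onPath (S : PathSys E ι) (i : ι) : Set S.Vert :=
  {v | ∃ t ≤ S.len i, v = S.pt i t}

/-- A walk in the glued graph contains the path named `i` entirely if all vertices of
that path occur consecutively (in forward or backward order) on the walk. -/
def WalkContainsPath (S : PathSys E ι) {x y : S.Vert} (W : S.graph.Walk x y) (i : ι) : Prop :=
  ∃ a, a + S.len i ≤ W.length ∧
    ((∀ t ≤ S.len i, W.getVert (a + t) = S.pt i t) ∨
     (∀ t ≤ S.len i, W.getVert (a + t) = S.pt i (S.len i - t)))

end PathSys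

/-- The exterior vertices of the graph `G_{L,R,ℓ,p,q}`. -/
inductive Ext (n d : ℕ) : Type
  | uL : Fin n → Ext n d
  | uR : Fin n → Ext n d
  | vL : Fin n → Ext n d
  | vR : Fin n → Ext n d
  | wL : Fin d → Ext n d
  | wR : Fin d → Ext n d
  | xL : Ext n d
  | xR : Ext n d
  | yL : Ext n d
  | yR : Ext n d

/-- Names for the paths of the graph `G_{L,R,ℓ,p,q}`. -/
inductive Idx (n d : ℕ) (l r : Fin n → Fin d → Fin 2) : Type
  | uvL : Fin n → Idx n d l r
  | uvR : Fin n → Idx n d l r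
  | vxL : Fin n → Idx n d l r
  | vxR : Fin n → Idx n d l r
  | vwL : (i : Fin n) → (k : Fin d) → l i k = 1 → Idx n d l r
  | vwR : (j : Fin n) → (k : Fin d) → r j k = 1 → Idx n d l r
  | ywL : Fin d → Idx n d l r
  | ywR : Fin d → Idx n d l r
  | ww : Fin d → Idx n d l r
  | xyL : Idx n d l r
  | xyR : Idx n d l r
  | yy : Idx n d l r

/-- The path system defining the graph `G_{L,R,ℓ,p,q}`. -/
def sys (n d : ℕ) (l r : Fin n → Fin d → Fin 2) (ℓ p q : ℕ) :
    PathSys (Ext n d) (Idx n d l r) where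
  src := fun i => match i with
    | .uvL i => .uL i
    | .uvR i => .uR i
    | .vxL i => .vL i
    | .vxR i => .vR i
    | .vwL i _ _ => .vL i
    | .vwR j _ _ => .vR j
    | .ywL _ => .yL
    | .ywR _ => .yR
    | .ww k => .wL k
    | .xyL => .xL
    | .xyR => .xR
    | .yy => .yL
  dst := fun i => match i with
    | .uvL i => .vL i
    | .uvR i => .vR i
    | .vxL _ => .xL
    | .vxR _ => .xR
    | .vwL _ k _ => .wL k
    | .vwR _ k _ => .wR k
    | .ywL k => .wL k
    | .ywR k => .wR k
    | .ww k => .wR k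
    | .xyL => .yL
    | .xyR => .yR
    | .yy => .yR
  len := fun i => match i with
    | .uvL _ => ℓ - p
    | .uvR _ => ℓ - p
    | .vxL _ => ℓ
    | .vxR _ => ℓ
    | .vwL _ _ _ => ℓ
    | .vwR _ _ _ => ℓ
    | .ywL _ => ℓ
    | .ywR _ => ℓ
    | .ww _ => q
    | .xyL => ℓ - p
    | .xyR => ℓ - p
    | .yy => p + q

/-- The set `P_i^L`. -/
def PL (n d : ℕ) (l r : Fin n → Fin d → Fin 2) (ℓ p q : ℕ) (i : Fin n) :
    Set (sys n d l r ℓ p q).Vert :=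
  (sys n d l r ℓ p q).onPath (.uvL i) ∪
    ((sys n d l r ℓ p q).onPath (.vxL i) \ {(sys n d l r ℓ p q).ext .xL}) ∪
    ⋃ (k : Fin d) (h : l i k = 1),
      ((sys n d l r ℓ p q).onPath (.vwL i k h) \ {(sys n d l r ℓ p q).ext (.wL k)})

/-- The set `P_j^R`. -/
def PR (n d : ℕ) (l r : Fin n → Fin d → Fin 2) (ℓ p q : ℕ) (j : Fin n) :
    Set (sys n d l r ℓ p q).Vert :=
  (sys n d l r ℓ p q).onPath (.uvR j) ∪
    ((sys n d l r ℓ p q).onPath (.vxR j) \ {(sys n d l r ℓ p q).ext .xR}) ∪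
    ⋃ (k : Fin d) (h : r j k = 1),
      ((sys n d l r ℓ p q).onPath (.vwR j k h) \ {(sys n d l r ℓ p q).ext (.wR k)})

/-- The set `V^L`. -/
def VL (n d : ℕ) (l r : Fin n → Fin d → Fin 2) (ℓ p q : ℕ) :
    Set (sys n d l r ℓ p q).Vert := ⋃ i : Fin n, PL n d l r ℓ p q i

/-- The set `V^R`. -/
def VR (n d : ℕ) (l r : Fin n → Fin d → Fin 2) (ℓ p q : ℕ) :
    Set (sys n d l r ℓ p q).Vert := ⋃ j : Fin n, PR n d l r ℓ p q j

/-- The set `V^M` of all remaining vertices. -/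
def VM (n d : ℕ) (l r : Fin n → Fin d → Fin 2) (ℓ p q : ℕ) :
    Set (sys n d l r ℓ p q).Vert := (VL n d l r ℓ p q ∪ VR n d l r ℓ p q)ᶜ

/-!
Upper bound: if every vertex lies on a walk from `y^L` to `y^R` of length at most `N`, then any two
vertices `s`, `t` together with such walks form a closed walk of length at most `2N` through both,
so their distance is at most `N`. For `N = 6ℓ - 3p + q` each path of `G` lies on such a walk; the
longest ones go back and forth between some `u_i` and `y` on its own side.

Lower bound: an integer labelling of the exterior vertices that varies along each path by at most
its length extends to a 1-Lipschitz function on all vertices, so differences of labels bound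
distances from below. Orthogonality of `l_i` and `r_j` means that for no `k` are `v_i^L`, `w_k^L`
and `v_j^R`, `w_k^R` both joined, which leaves room for labels growing by `6ℓ - 3p + q` from `u_i^L`
to `u_j^R`.
-/

section Graph

variable {V : Type*} {G : SimpleGraph V}

lemma ediam_le_of_edist_add_edist_le {a b : V} {N : ℕ∞}
    (h : ∀ v, G.edist v a + G.edist v b ≤ N) : G.ediam ≤ N := by
  refine SimpleGraph.ediam_le_of_edist_le fun u v => ?_
  have via (c : V) : G.edist u v ≤ G.edist u c + G.edist v c :=
    SimpleGraph.edist_triangle.trans_eq (by rw [SimpleGraph.edist_comm (u := c)])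
  have two_mul_le : G.edist u v + G.edist u v ≤ N + N :=
    calc G.edist u v + G.edist u v
        ≤ (G.edist u a + G.edist v a) + (G.edist u b + G.edist v b) := add_le_add (via a) (via b)
      _ = (G.edist u a + G.edist u b) + (G.edist v a + G.edist v b) := add_add_add_comm ..
      _ ≤ N + N := add_le_add (h u) (h v)
  contrapose! two_mul_le
  exact ENat.add_lt_add two_mul_le two_mul_le

lemma le_add_length_of_adj_le_add_one {f : V → ℤ} (hf : ∀ u v, G.Adj u v → f v ≤ f u + 1)
    {a b : V} (W : G.Walk a b) : f b ≤ f a + W.length := by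
  induction W with
  | nil => simp
  | cons hadj W ih =>
    have := hf _ _ hadj
    rw [SimpleGraph.Walk.length_cons]
    omega

lemma le_edist_of_adj_le_add_one {f : V → ℤ} (hf : ∀ u v, G.Adj u v → f v ≤ f u + 1)
    {a b : V} {N : ℕ} (hN : f a + N ≤ f b) : (N : ℕ∞) ≤ G.edist a b := by
  refine le_iInf fun W => ?_
  have := le_add_length_of_adj_le_add_one hf W
  exact_mod_cast (by omega : N ≤ W.length)

end Graph

namespace PathSys

section Points

variable {E ι : Type} (S : PathSys E ι)

lemma pt_zero (i : ι) : S.pt i 0 = S.ext (S.src i) := by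
  simp [pt]

lemma pt_len (i : ι) : S.pt i (S.len i) = S.ext (S.dst i) := by
  by_cases h : S.len i = 0
  · rw [h, pt_zero]
    exact congrArg Sum.inl (Quot.sound ⟨i, h, rfl, rfl⟩)
  · simp [pt, h]

lemma pt_of_interior {i : ι} {t : ℕ} (ht : 0 < t ∧ t < S.len i) :
    S.pt i t = Sum.inr ⟨i, t, ht⟩ :=
  dif_pos ht

lemma ext_src_mem_onPath (i : ι) : S.ext (S.src i) ∈ S.onPath i :=
  ⟨0, Nat.zero_le _, (S.pt_zero i).symm⟩

lemma ext_dst_mem_onPath (i : ι) : S.ext (S.dst i) ∈ S.onPath i :=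
  ⟨S.len i, le_rfl, (S.pt_len i).symm⟩

lemma exists_mem_onPath (hends : ∀ c, ∃ i, S.src i = c ∨ S.dst i = c) (v : S.Vert) :
    ∃ i, v ∈ S.onPath i := by
  obtain ⟨⟨c⟩⟩ | ⟨i, t, ht⟩ := v
  · obtain ⟨i, rfl | rfl⟩ := hends c
    · exact ⟨i, S.ext_src_mem_onPath i⟩
    · exact ⟨i, S.ext_dst_mem_onPath i⟩
  · exact ⟨i, t, ht.2.le, (S.pt_of_interior ht).symm⟩

end Points

section UpperBound

variable {E ι : Type} (S : PathSys E ι)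

lemma edist_pt_succ_le {i : ι} {t : ℕ} (ht : t + 1 ≤ S.len i) :
    S.graph.edist (S.pt i t) (S.pt i (t + 1)) ≤ 1 := by
  rw [SimpleGraph.edist_le_one_iff_adj_or_eq, graph, SimpleGraph.fromRel_adj, or_iff_not_imp_right]
  exact fun hne => ⟨hne, .inl ⟨i, t, ht, rfl, rfl⟩⟩

lemma edist_pt_add_le {i : ι} {s m : ℕ} (h : s + m ≤ S.len i) :
    S.graph.edist (S.pt i s) (S.pt i (s + m)) ≤ m := by
  induction m with
  | zero => simp
  | succ m ih =>
    calc S.graph.edist (S.pt i s) (S.pt i (s + m + 1))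
        ≤ S.graph.edist (S.pt i s) (S.pt i (s + m)) +
            S.graph.edist (S.pt i (s + m)) (S.pt i (s + m + 1)) := SimpleGraph.edist_triangle
      _ ≤ m + 1 := add_le_add (ih (by omega)) (S.edist_pt_succ_le h)
      _ = (m + 1 : ℕ) := by push_cast; rfl

lemma edist_pt_src_le {i : ι} {t : ℕ} (ht : t ≤ S.len i) :
    S.graph.edist (S.pt i t) (S.ext (S.src i)) ≤ t := by
  have := S.edist_pt_add_le (i := i) (s := 0) (m := t) (by omega)
  rwa [Nat.zero_add, pt_zero, SimpleGraph.edist_comm] at this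

lemma edist_pt_dst_le {i : ι} {t : ℕ} (ht : t ≤ S.len i) :
    S.graph.edist (S.pt i t) (S.ext (S.dst i)) ≤ (S.len i - t : ℕ) := by
  have := S.edist_pt_add_le (i := i) (s := t) (m := S.len i - t) (by omega)
  rwa [Nat.add_sub_cancel' ht, pt_len] at this

lemma edist_src_dst_le (i : ι) :
    S.graph.edist (S.ext (S.src i)) (S.ext (S.dst i)) ≤ S.len i := by
  simpa only [pt_zero, Nat.sub_zero] using S.edist_pt_dst_le (i := i) (Nat.zero_le _)

lemma edist_src_le (i : ι) {a : S.Vert} {m : ℕ}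
    (h : S.graph.edist (S.ext (S.dst i)) a ≤ m) :
    S.graph.edist (S.ext (S.src i)) a ≤ (S.len i + m : ℕ) := by
  push_cast
  exact SimpleGraph.edist_triangle.trans (add_le_add (S.edist_src_dst_le i) h)

lemma edist_dst_le (i : ι) {a : S.Vert} {m : ℕ}
    (h : S.graph.edist (S.ext (S.src i)) a ≤ m) :
    S.graph.edist (S.ext (S.dst i)) a ≤ (S.len i + m : ℕ) := by
  push_cast
  exact SimpleGraph.edist_triangle.trans
    (add_le_add (SimpleGraph.edist_comm.trans_le (S.edist_src_dst_le i)) h)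

variable {S}

lemma edist_add_edist_le_of_mem_onPath {i : ι} {v : S.Vert} (hv : v ∈ S.onPath i)
    {a b : S.Vert} {m k : ℕ∞} (ha : S.graph.edist (S.ext (S.src i)) a ≤ m)
    (hb : S.graph.edist (S.ext (S.dst i)) b ≤ k) :
    S.graph.edist v a + S.graph.edist v b ≤ m + S.len i + k := by
  obtain ⟨t, ht, rfl⟩ := hv
  have hlen : (S.len i : ℕ∞) = t + (S.len i - t : ℕ) := by
    exact_mod_cast (Nat.add_sub_cancel' ht).symm
  calc S.graph.edist (S.pt i t) a + S.graph.edist (S.pt i t) b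
      ≤ (t + m) + ((S.len i - t : ℕ) + k) :=
        add_le_add
          (SimpleGraph.edist_triangle.trans (add_le_add (S.edist_pt_src_le ht) ha))
          (SimpleGraph.edist_triangle.trans (add_le_add (S.edist_pt_dst_le ht) hb))
    _ = m + S.len i + k := by rw [hlen]; ring

lemma ediam_le_of_forall_path (hends : ∀ c, ∃ i, S.src i = c ∨ S.dst i = c)
    {a b : S.Vert} {f g : E → ℕ} (hf : ∀ c, S.graph.edist (S.ext c) a ≤ f c)
    (hg : ∀ c, S.graph.edist (S.ext c) b ≤ g c) {N : ℕ}
    (hN : ∀ i, f (S.src i) + S.len i + g (S.dst i) ≤ N ∨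
      g (S.src i) + S.len i + f (S.dst i) ≤ N) :
    S.graph.ediam ≤ N := by
  refine ediam_le_of_edist_add_edist_le (a := a) (b := b) fun v => ?_
  obtain ⟨i, hv⟩ := S.exists_mem_onPath hends v
  obtain h | h := hN i
  · exact (edist_add_edist_le_of_mem_onPath hv (hf _) (hg _)).trans (by exact_mod_cast h)
  · rw [add_comm]
    exact (edist_add_edist_le_of_mem_onPath hv (hg _) (hf _)).trans (by exact_mod_cast h)

end UpperBound

section LowerBound

variable {E ι : Type} {S : PathSys E ι} {φ : E → ℤ}

/-- An integer potential on the exterior vertices that varies along each path by at most the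
length of the path. Differences of potential bound distances from below. -/
def IsPotential (S : PathSys E ι) (φ : E → ℤ) : Prop :=
  ∀ i, |φ (S.src i) - φ (S.dst i)| ≤ S.len i

/-- The extension of a potential to all vertices; among the extensions that are 1-Lipschitz along
the paths we take the largest one. -/
def IsPotential.extend (h : S.IsPotential φ) : S.Vert → ℤ :=
  Sum.elim
    (Quot.lift φ <| by
      rintro _ _ ⟨i, hlen, rfl, rfl⟩
      simpa [hlen, sub_eq_zero] using h i)
    fun x => min (φ (S.src x.1) + x.2) (φ (S.dst x.1) + (S.len x.1 - x.2))

lemma IsPotential.extend_ext (h : S.IsPotential φ) (c : E) : h.extend (S.ext c) = φ c :=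
  rfl

lemma IsPotential.extend_pt (h : S.IsPotential φ) {i : ι} {t : ℕ} (ht : t ≤ S.len i) :
    h.extend (S.pt i t) = min (φ (S.src i) + t) (φ (S.dst i) + (S.len i - t)) := by
  have hi := abs_le.1 (h i)
  obtain rfl | ht₀ := t.eq_zero_or_pos
  · rw [pt_zero, extend_ext]
    omega
  obtain rfl | ht₁ := ht.eq_or_lt
  · rw [pt_len, extend_ext]
    omega
  · rw [S.pt_of_interior ⟨ht₀, ht₁⟩]
    rfl

lemma IsPotential.extend_le_of_adj (h : S.IsPotential φ) (u v : S.Vert)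
    (huv : S.graph.Adj u v) : h.extend v ≤ h.extend u + 1 := by
  rw [graph, SimpleGraph.fromRel_adj] at huv
  obtain ⟨-, ⟨i, t, ht, rfl, rfl⟩ | ⟨i, t, ht, rfl, rfl⟩⟩ := huv
  all_goals
    rw [h.extend_pt ht, h.extend_pt (Nat.le_of_succ_le ht)]
    omega

lemma IsPotential.le_edist (h : S.IsPotential φ) {a b : E} {N : ℕ} (hN : φ a + N ≤ φ b) :
    (N : ℕ∞) ≤ S.graph.edist (S.ext a) (S.ext b) :=
  le_edist_of_adj_le_add_one h.extend_le_of_adj hN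

end LowerBound

end PathSys

section Diameter

variable {n d ℓ p q : ℕ} {l r : Fin n → Fin d → Fin 2}

lemma exists_src_eq_or_dst_eq (c : Ext n d) :
    ∃ e, (sys n d l r ℓ p q).src e = c ∨ (sys n d l r ℓ p q).dst e = c := by
  cases c with
  | uL i => exact ⟨.uvL i, .inl rfl⟩
  | uR j => exact ⟨.uvR j, .inl rfl⟩
  | vL i => exact ⟨.uvL i, .inr rfl⟩
  | vR j => exact ⟨.uvR j, .inr rfl⟩
  | wL k => exact ⟨.ww k, .inl rfl⟩
  | wR k => exact ⟨.ww k, .inr rfl⟩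
  | xL => exact ⟨.xyL, .inl rfl⟩
  | xR => exact ⟨.xyR, .inl rfl⟩
  | yL => exact ⟨.yy, .inl rfl⟩
  | yR => exact ⟨.yy, .inr rfl⟩

/-- Length of a route from an exterior vertex to `y^L` that avoids the paths `π(v_i, w_k)`. -/
def routeToYL (ℓ p q : ℕ) : Ext n d → ℕ
  | .yL => 0
  | .xL => ℓ - p
  | .vL _ => ℓ + (ℓ - p)
  | .uL _ => (ℓ - p) + (ℓ + (ℓ - p))
  | .wL _ => ℓ
  | .yR => p + q
  | .xR => (ℓ - p) + (p + q)
  | .vR _ => ℓ + ((ℓ - p) + (p + q))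
  | .uR _ => (ℓ - p) + (ℓ + ((ℓ - p) + (p + q)))
  | .wR _ => q + ℓ

/-- Length of a route from an exterior vertex to `y^R` that avoids the paths `π(v_i, w_k)`. -/
def routeToYR (ℓ p q : ℕ) : Ext n d → ℕ
  | .yR => 0
  | .xR => ℓ - p
  | .vR _ => ℓ + (ℓ - p)
  | .uR _ => (ℓ - p) + (ℓ + (ℓ - p))
  | .wR _ => ℓ
  | .yL => p + q
  | .xL => (ℓ - p) + (p + q)
  | .vL _ => ℓ + ((ℓ - p) + (p + q))
  | .uL _ => (ℓ - p) + (ℓ + ((ℓ - p) + (p + q)))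
  | .wL _ => q + ℓ

lemma edist_yL_le_routeToYL (c : Ext n d) :
    (sys n d l r ℓ p q).graph.edist ((sys n d l r ℓ p q).ext c) ((sys n d l r ℓ p q).ext .yL) ≤
      routeToYL ℓ p q c := by
  set S := sys n d l r ℓ p q
  have yL : S.graph.edist (S.ext .yL) (S.ext .yL) ≤ (0 : ℕ) := by simp
  have xL := S.edist_src_dst_le .xyL
  have vL i := S.edist_src_le (.vxL i) xL
  have yR := S.edist_dst_le .yy yL
  have xR := S.edist_src_le .xyR yR
  have vR j := S.edist_src_le (.vxR j) xR
  have wL k := S.edist_dst_le (.ywL k) yL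
  cases c with
  | yL => exact yL
  | xL => exact xL
  | vL i => exact vL i
  | uL i => exact S.edist_src_le (.uvL i) (vL i)
  | wL k => exact wL k
  | yR => exact yR
  | xR => exact xR
  | vR j => exact vR j
  | uR j => exact S.edist_src_le (.uvR j) (vR j)
  | wR k => exact S.edist_dst_le (.ww k) (wL k)

lemma edist_yR_le_routeToYR (c : Ext n d) :
    (sys n d l r ℓ p q).graph.edist ((sys n d l r ℓ p q).ext c) ((sys n d l r ℓ p q).ext .yR) ≤
      routeToYR ℓ p q c := by
  set S := sys n d l r ℓ p q
  have yR : S.graph.edist (S.ext .yR) (S.ext .yR) ≤ (0 : ℕ) := by simp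
  have xR := S.edist_src_dst_le .xyR
  have vR j := S.edist_src_le (.vxR j) xR
  have yL := S.edist_src_dst_le .yy
  have xL := S.edist_src_le .xyL yL
  have vL i := S.edist_src_le (.vxL i) xL
  have wR k := S.edist_dst_le (.ywR k) yR
  cases c with
  | yR => exact yR
  | xR => exact xR
  | vR j => exact vR j
  | uR j => exact S.edist_src_le (.uvR j) (vR j)
  | wR k => exact wR k
  | yL => exact yL
  | xL => exact xL
  | vL i => exact vL i
  | uL i => exact S.edist_src_le (.uvL i) (vL i)
  | wL k => exact S.edist_src_le (.ww k) (wR k)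

lemma route_through_path_le (hp : p ≤ ℓ) (e : Idx n d l r) :
    routeToYL ℓ p q ((sys n d l r ℓ p q).src e) + (sys n d l r ℓ p q).len e +
        routeToYR ℓ p q ((sys n d l r ℓ p q).dst e) ≤ 6 * ℓ - 3 * p + q ∨
      routeToYR ℓ p q ((sys n d l r ℓ p q).src e) + (sys n d l r ℓ p q).len e +
        routeToYL ℓ p q ((sys n d l r ℓ p q).dst e) ≤ 6 * ℓ - 3 * p + q := by
  cases e <;> simp only [sys, routeToYL, routeToYR] <;> omega

lemma ediam_sys_le (hp : p ≤ ℓ) :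
    (sys n d l r ℓ p q).graph.ediam ≤ (6 * ℓ - 3 * p + q : ℕ) :=
  PathSys.ediam_le_of_forall_path exists_src_eq_or_dst_eq
    edist_yL_le_routeToYL edist_yR_le_routeToYR (route_through_path_le hp)

/-- A labelling of the exterior vertices, rising from `0` at `u_i^L` to `6ℓ - 3p + q` at `u_j^R`,
that witnesses the distance of these two vertices when `l_i` and `r_j` are orthogonal. The labels
of the `w_k` depend on `l_i` alone: by orthogonality `v_j^R` is joined to `w_k^R` only where
`l_i[k] = 0`. -/
def orthPotential (l : Fin n → Fin d → Fin 2) (ℓ p q : ℤ) (i j : Fin n) : Ext n d → ℤ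
  | .uL a => if a = i then 0 else 3 * ℓ - p
  | .vL a => if a = i then ℓ - p else 3 * ℓ - p
  | .xL => 2 * ℓ - p
  | .yL => 3 * ℓ - 2 * p
  | .wL k => if l i k = 1 then 2 * ℓ - p else 4 * ℓ - 2 * p
  | .wR k => (if l i k = 1 then 2 * ℓ - p else 4 * ℓ - 2 * p) + q
  | .yR => 3 * ℓ - p + q
  | .xR => 4 * ℓ - 2 * p + q
  | .vR b => if b = j then 5 * ℓ - 2 * p + q else 3 * ℓ - 2 * p + q
  | .uR b => if b = j then 6 * ℓ - 3 * p + q else 3 * ℓ - 2 * p + q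

lemma isPotential_orthPotential (hp : p ≤ ℓ) {i j : Fin n} (horth : Orth (l i) (r j)) :
    (sys n d l r ℓ p q).IsPotential (orthPotential l ℓ p q i j) := by
  intro e
  rw [abs_le]
  cases e with
  | vwL a k hbit =>
    have bit_of_eq : a = i → l i k = 1 := by rintro rfl; exact hbit
    simp only [sys, orthPotential]
    omega
  | vwR b k hbit =>
    have bit_ne_of_eq : b = j → l i k ≠ 1 := by
      rintro rfl
      obtain h | h := horth k <;> simp_all
    simp only [sys, orthPotential]
    omega
  | _ =>
    simp only [sys, orthPotential]
    omega

lemma le_edist_uL_uR (hp : p ≤ ℓ) {i j : Fin n} (horth : Orth (l i) (r j)) :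
    ((6 * ℓ - 3 * p + q : ℕ) : ℕ∞) ≤
      (sys n d l r ℓ p q).graph.edist ((sys n d l r ℓ p q).ext (.uL i))
        ((sys n d l r ℓ p q).ext (.uR j)) := by
  refine (isPotential_orthPotential hp horth).le_edist ?_
  simp only [orthPotential, if_true]
  omega

end Diameter

theorem diameter_of_G_orth_pair_general (n d ℓ p q : ℕ) (hp : p ≤ ℓ)
    (l r : Fin n → Fin d → Fin 2) (horth : ∃ i j, Orth (l i) (r j)) :
    (sys n d l r ℓ p q).graph.diam = 6 * ℓ - 3 * p + q := by
  obtain ⟨i, j, hij⟩ := horth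
  have hle : (sys n d l r ℓ p q).graph.ediam ≤ (6 * ℓ - 3 * p + q : ℕ) := ediam_sys_le hp
  have hge : ((6 * ℓ - 3 * p + q : ℕ) : ℕ∞) ≤ (sys n d l r ℓ p q).graph.ediam :=
    (le_edist_uL_uR hp hij).trans SimpleGraph.edist_le_ediam
  rw [SimpleGraph.diam, le_antisymm hle hge, ENat.toNat_natCast]

theorem diameter_of_G_orth_pair (n d ℓ p q : ℕ) (hn : 1 ≤ n) (hd : 1 ≤ d)
    (hℓ : 1 ≤ ℓ) (hp : p ≤ 1) (l r : Fin n → Fin d → Fin 2)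
    (horth : ∃ i j, Orth (l i) (r j)) :
    (sys n d l r ℓ p q).graph.diam = 6 * ℓ - 3 * p + q :=
  diameter_of_G_orth_pair_general n d ℓ p q (hp.trans hℓ) l r horth

end GraphOV
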